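/- If E ≥ |B| then L(e;E) = ∅, while if 0 < E < |B| then L(e;E) = { 2πA/√(B²/E² − 1) }. -/

import Mathlib

open Real

noncomputable section

/-- The simply connected three-dimensional Heisenberg group, modeled as `ℝ³` in
exponential coordinates. -/
abbrev H3 : Type := ℝ × ℝ × ℝ

/-- Heisenberg group multiplication in exponential coordinates. -/
def Hmul (p q : H3) : H3 :=
  (p.1 + q.1, p.2.1 + q.2.1, p.2.2 + q.2.2 + (p.1 * q.2.1 - p.2.1 * q.1) / 2)

open Classical in
/-- The magnetic geodesic through the identity with parameters `(u₀, v₀, z₀)`, for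
metric parameter `A` and magnetic strength `B`. -/
def magGeo (A B u₀ v₀ z₀ : ℝ) : ℝ → H3 := fun t =>
  if z₀ ≠ 0 then
    ((u₀ / z₀) * Real.sin (z₀ * t / A) - (v₀ / z₀) * (1 - Real.cos (z₀ * t / A)),
     (u₀ / z₀) * (1 - Real.cos (z₀ * t / A)) + (v₀ / z₀) * Real.sin (z₀ * t / A),
     (z₀ + B + (u₀ ^ 2 + v₀ ^ 2) / (2 * A * z₀)) * t
       - ((u₀ ^ 2 + v₀ ^ 2) / (2 * z₀ ^ 2)) * Real.sin (z₀ * t / A))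
  else (u₀ * t / A, v₀ * t / A, B * t)

/-- `L(e;E)`: the set of `E·ω` over minimal positive periods `ω` of nonconstant
periodic magnetic geodesics of energy `E`. -/
def LsetId (A B E : ℝ) : Set ℝ :=
  {l | ∃ (a : H3) (u₀ v₀ z₀ ω : ℝ),
    E ^ 2 = (u₀ ^ 2 + v₀ ^ 2) / A + (z₀ + B) ^ 2 ∧
    (∃ t s, Hmul a (magGeo A B u₀ v₀ z₀ t) ≠ Hmul a (magGeo A B u₀ v₀ z₀ s)) ∧
    IsLeast {ω' : ℝ | 0 < ω' ∧
      ∀ t, Hmul a (magGeo A B u₀ v₀ z₀ (t + ω')) = Hmul a (magGeo A B u₀ v₀ z₀ t)} ω ∧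
    l = E * ω}

/-!
A nonconstant magnetic geodesic with `z₀ = 0` or `u₀ = v₀ = 0` is a one-parameter subgroup, hence
not periodic. Otherwise its horizontal projection runs around a circle with least period
`2πA/|z₀|`, and after each turn the geodesic is translated vertically by its central drift, so it
closes up exactly when the drift vanishes. Together with the energy equation, vanishing drift says
that `z₀ (z₀ + B) < 0` and `z₀² = B² - E²`; such a `z₀` exists exactly when `E < |B|`, and then the
length is `E · 2πA/|z₀|`.
-/

section

/-- The mean velocity of `magGeo A B u v z` along the center, i.e. the coefficient of `t` in its
last coordinate. At `z = 0` the junk value of the division leaves `B`, which is still the central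
velocity. -/
def verticalDrift (A B u v z : ℝ) : ℝ :=
  z + B + (u ^ 2 + v ^ 2) / (2 * A * z)

variable {A B E u v z w : ℝ}

theorem Hmul_right_inj {a p q : H3} : Hmul a p = Hmul a q ↔ p = q := by
  refine ⟨fun h => ?_, congrArg (Hmul a)⟩
  simp only [Hmul, Prod.mk.injEq] at h
  obtain ⟨hx, hy, hz⟩ := h
  have hx : p.1 = q.1 := add_left_cancel hx
  have hy : p.2.1 = q.2.1 := add_left_cancel hy
  rw [hx, hy] at hz
  exact Prod.ext hx (Prod.ext hy (by linarith))

theorem eq_zero_of_periodic_smul {R M : Type*} [Semiring R] [IsDomain R] [AddCommMonoid M]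
    [Module R M] [Module.IsTorsionFree R M] {p : M} {c : R} (hc : c ≠ 0)
    (h : Function.Periodic (fun t : R => t • p) c) : p = 0 := by
  have hcp : c • p = 0 := by simpa using h 0
  exact (smul_eq_zero.1 hcp).resolve_left hc

theorem isLeast_pos_cos_mul_eq_one {k : ℝ} (hk : k ≠ 0) :
    IsLeast {w : ℝ | 0 < w ∧ cos (k * w) = 1} (2 * π / |k|) := by
  have hk' : 0 < |k| := abs_pos.2 hk
  have cos_abs_mul (w : ℝ) : cos (|k| * w) = cos (k * w) := by
    rcases abs_choice k with h | h <;> simp [h]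
  refine ⟨⟨by positivity, ?_⟩, fun w ⟨hw, hcos⟩ => ?_⟩
  · rw [← cos_abs_mul, mul_div_cancel₀ _ hk'.ne', cos_two_pi]
  · by_contra! hlt
    have hkw : 0 < |k| * w := mul_pos hk' hw
    have hlt' : |k| * w < 2 * π := by rwa [lt_div_iff₀' hk'] at hlt
    rw [← cos_abs_mul, cos_eq_one_iff_of_lt_of_lt (by linarith [pi_pos]) hlt'] at hcos
    exact hkw.ne' hcos

theorem cos_eq_one_of_chord_eq_zero {θ : ℝ} (huv : u ^ 2 + v ^ 2 ≠ 0)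
    (hx : u * sin θ - v * (1 - cos θ) = 0) (hy : u * (1 - cos θ) + v * sin θ = 0) :
    cos θ = 1 := by
  have hchord : (u ^ 2 + v ^ 2) * (2 * (1 - cos θ)) = 0 := by
    linear_combination (u * sin θ - v * (1 - cos θ)) * hx + (u * (1 - cos θ) + v * sin θ) * hy -
      (u ^ 2 + v ^ 2) * sin_sq_add_cos_sq θ
  linarith [(mul_eq_zero.1 hchord).resolve_left huv]

theorem magGeo_zero : magGeo A B u v z 0 = 0 := by
  by_cases hz : z = 0 <;> simp [magGeo, hz]

theorem exists_magGeo_eq_smul (h : z = 0 ∨ u ^ 2 + v ^ 2 = 0) :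
    ∃ p : H3, ∀ t, magGeo A B u v z t = t • p := by
  rcases eq_or_ne z 0 with rfl | hz
  · refine ⟨(u / A, v / A, B), fun t => ?_⟩
    simp [magGeo, mul_comm t, mul_div_right_comm]
  · have huv := h.resolve_left hz
    have hu : u = 0 := by nlinarith [sq_nonneg u, sq_nonneg v]
    have hv : v = 0 := by nlinarith [sq_nonneg u, sq_nonneg v]
    refine ⟨(0, 0, z + B), fun t => ?_⟩
    simp [magGeo, hz, hu, hv, mul_comm t]

theorem ne_zero_of_periodic_magGeo (hw : w ≠ 0) (hper : Function.Periodic (magGeo A B u v z) w)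
    (hne : ∃ t s, magGeo A B u v z t ≠ magGeo A B u v z s) : z ≠ 0 ∧ u ^ 2 + v ^ 2 ≠ 0 := by
  rw [← not_or]
  intro hdeg
  obtain ⟨p, hp⟩ := exists_magGeo_eq_smul (A := A) (B := B) hdeg
  rw [funext hp] at hper hne
  simp [eq_zero_of_periodic_smul hw hper] at hne

theorem magGeo_add_of_cos_eq_one (hz : z ≠ 0) (hcos : cos (z * w / A) = 1) (t : ℝ) :
    magGeo A B u v z (t + w) = magGeo A B u v z t + (0, 0, verticalDrift A B u v z * w) := by
  have hsin : sin (z * w / A) = 0 := sin_eq_zero_iff_cos_eq.2 (Or.inl hcos)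
  have hangle : z * (t + w) / A = z * t / A + z * w / A := by ring
  ext <;> simp [magGeo, hz, hangle, sin_add, cos_add, hsin, hcos, verticalDrift]
  ring

theorem periodic_magGeo_iff (hz : z ≠ 0) (huv : u ^ 2 + v ^ 2 ≠ 0) :
    Function.Periodic (magGeo A B u v z) w ↔
      cos (z * w / A) = 1 ∧ verticalDrift A B u v z * w = 0 := by
  constructor
  · intro hper
    have hclosed : magGeo A B u v z (0 + w) = magGeo A B u v z 0 := hper 0
    have hcos : cos (z * w / A) = 1 := by
      rw [zero_add, magGeo_zero] at hclosed
      simp only [magGeo, ne_eq, hz, not_false_eq_true, if_true, Prod.mk_eq_zero] at hclosed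
      obtain ⟨hx, hy, -⟩ := hclosed
      have huv_div : (u / z) ^ 2 + (v / z) ^ 2 ≠ 0 := by
        rw [div_pow, div_pow, ← add_div]
        exact div_ne_zero huv (pow_ne_zero 2 hz)
      exact cos_eq_one_of_chord_eq_zero huv_div hx hy
    rw [magGeo_add_of_cos_eq_one hz hcos, add_eq_left] at hclosed
    exact ⟨hcos, congrArg (fun p : H3 => p.2.2) hclosed⟩
  · rintro ⟨hcos, hdrift⟩ t
    rw [magGeo_add_of_cos_eq_one hz hcos, hdrift]
    exact add_zero _

theorem exists_magGeo_ne (hA : A ≠ 0) (hz : z ≠ 0) (huv : u ^ 2 + v ^ 2 ≠ 0) :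
    ∃ t s, magGeo A B u v z t ≠ magGeo A B u v z s := by
  by_contra! hconst
  have hper : Function.Periodic (magGeo A B u v z) (π * A / z) := fun t => hconst _ t
  have hcos := ((periodic_magGeo_iff hz huv).1 hper).1
  have hangle : z * (π * A / z) / A = π := by field_simp
  rw [hangle, cos_pi] at hcos
  norm_num at hcos

theorem isLeast_period_magGeo (hA : 0 < A) (hz : z ≠ 0) (huv : u ^ 2 + v ^ 2 ≠ 0)
    (hdrift : verticalDrift A B u v z = 0) :
    IsLeast {w | 0 < w ∧ Function.Periodic (magGeo A B u v z) w} (2 * π * A / |z|) := by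
  have hperiod : 2 * π * A / |z| = 2 * π / |z / A| := by
    rw [abs_div, abs_of_pos hA, div_div_eq_mul_div]
  simp only [periodic_magGeo_iff hz huv, hdrift, zero_mul, and_true, mul_div_right_comm z, hperiod]
  exact isLeast_pos_cos_mul_eq_one (div_ne_zero hz hA.ne')

theorem verticalDrift_eq_zero_iff (hA : A ≠ 0) (hz : z ≠ 0) :
    verticalDrift A B u v z = 0 ↔ u ^ 2 + v ^ 2 = -(2 * A * (z * (z + B))) := by
  unfold verticalDrift
  field_simp
  constructor <;> intro h <;> linarith

theorem mem_LsetId_iff_verticalDrift {l : ℝ} (hA : 0 < A) :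
    l ∈ LsetId A B E ↔ ∃ u v z, E ^ 2 = (u ^ 2 + v ^ 2) / A + (z + B) ^ 2 ∧ z ≠ 0 ∧
      u ^ 2 + v ^ 2 ≠ 0 ∧ verticalDrift A B u v z = 0 ∧ l = E * (2 * π * A / |z|) := by
  simp only [LsetId, ne_eq, Hmul_right_inj]
  constructor
  · rintro ⟨-, u, v, z, w, henergy, hne, hleast, rfl⟩
    obtain ⟨hw, hper⟩ := hleast.1
    obtain ⟨hz, huv⟩ := ne_zero_of_periodic_magGeo hw.ne' hper hne
    have hdrift : verticalDrift A B u v z = 0 :=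
      (mul_eq_zero.1 ((periodic_magGeo_iff hz huv).1 hper).2).resolve_right hw.ne'
    have hw_eq := hleast.unique (isLeast_period_magGeo hA hz huv hdrift)
    exact ⟨u, v, z, henergy, hz, huv, hdrift, by rw [hw_eq]⟩
  · rintro ⟨u, v, z, henergy, hz, huv, hdrift, rfl⟩
    exact ⟨0, u, v, z, _, henergy, exists_magGeo_ne hA.ne' hz huv,
      isLeast_period_magGeo hA hz huv hdrift, rfl⟩

theorem mem_LsetId_iff {l : ℝ} (hA : 0 < A) :
    l ∈ LsetId A B E ↔
      ∃ z, z * (z + B) < 0 ∧ z ^ 2 = B ^ 2 - E ^ 2 ∧ l = E * (2 * π * A / |z|) := by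
  rw [mem_LsetId_iff_verticalDrift hA]
  constructor
  · rintro ⟨u, v, z, henergy, hz, huv, hdrift, rfl⟩
    rw [verticalDrift_eq_zero_iff hA.ne' hz] at hdrift
    have huv_pos : 0 < u ^ 2 + v ^ 2 := lt_of_le_of_ne (by positivity) huv.symm
    refine ⟨z, by_contra fun hneg => ?_, ?_, rfl⟩
    · have : 0 ≤ 2 * A * (z * (z + B)) := mul_nonneg (by positivity) (not_lt.1 hneg)
      linarith
    · rw [henergy, hdrift]
      field_simp
      ring
  · rintro ⟨z, hneg, hsq, rfl⟩
    have hz : z ≠ 0 := left_ne_zero_of_mul hneg.ne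
    have hpos : 0 < -(2 * A * (z * (z + B))) :=
      neg_pos.2 (mul_neg_of_pos_of_neg (by positivity) hneg)
    have huv : √(-(2 * A * (z * (z + B)))) ^ 2 + 0 ^ 2 = -(2 * A * (z * (z + B))) := by
      rw [sq_sqrt hpos.le]
      ring
    refine ⟨√(-(2 * A * (z * (z + B)))), 0, z, ?_, hz, huv.trans_ne hpos.ne',
      (verticalDrift_eq_zero_iff hA.ne' hz).2 huv, rfl⟩
    rw [huv]
    field_simp
    linear_combination hsq

theorem exists_mul_add_neg_of_lt_abs (hE : 0 < E) (hB : E < |B|) :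
    ∃ z, z * (z + B) < 0 ∧ z ^ 2 = B ^ 2 - E ^ 2 := by
  have hsq : E ^ 2 < B ^ 2 := sq_lt_sq.2 (by rwa [abs_of_pos hE])
  have hr : 0 < √(B ^ 2 - E ^ 2) := sqrt_pos.2 (sub_pos.2 hsq)
  have hr_sq : √(B ^ 2 - E ^ 2) ^ 2 = B ^ 2 - E ^ 2 := sq_sqrt (sub_pos.2 hsq).le
  have hr_lt : √(B ^ 2 - E ^ 2) < |B| := by
    rw [← sqrt_sq_eq_abs]
    exact sqrt_lt_sqrt (sub_pos.2 hsq).le (sub_lt_self _ (by positivity))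
  rcases lt_abs.1 hr_lt with h | h
  · exact ⟨-√(B ^ 2 - E ^ 2), mul_neg_of_neg_of_pos (neg_neg_of_pos hr) (by linarith),
      by rw [neg_sq, hr_sq]⟩
  · exact ⟨√(B ^ 2 - E ^ 2), mul_neg_of_pos_of_neg hr (by linarith), hr_sq⟩

theorem sqrt_div_sq_sub_one_of_sq_eq (hE : 0 < E) (hz : z ^ 2 = B ^ 2 - E ^ 2) :
    √(B ^ 2 / E ^ 2 - 1) = |z| / E := by
  have hsq : B ^ 2 / E ^ 2 - 1 = (z / E) ^ 2 := by
    rw [div_pow, hz, sub_div, div_self (by positivity)]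
  rw [hsq, sqrt_sq_eq_abs, abs_div, abs_of_pos hE]

end

/-- If `E ≥ |B|` then `L(e;E) = ∅`, while if `0 < E < |B|` then
`L(e;E) = {2πA/√(B²/E² - 1)}`. -/
theorem stmt11 (A B E : ℝ) (hA : 0 < A) (hE : 0 < E) :
    (|B| ≤ E → LsetId A B E = ∅) ∧
    (E < |B| → LsetId A B E = {2 * π * A / Real.sqrt (B ^ 2 / E ^ 2 - 1)}) := by
  constructor
  · intro hB
    refine Set.eq_empty_of_forall_notMem fun l hl => ?_
    obtain ⟨z, hneg, hsq, -⟩ := (mem_LsetId_iff hA).1 hl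
    have hz_sq : 0 < z ^ 2 := sq_pos_of_ne_zero (left_ne_zero_of_mul hneg.ne)
    have hBE : B ^ 2 ≤ E ^ 2 := sq_le_sq.2 (hB.trans (le_abs_self E))
    linarith
  · intro hB
    have hlength (z : ℝ) (hsq : z ^ 2 = B ^ 2 - E ^ 2) :
        E * (2 * π * A / |z|) = 2 * π * A / √(B ^ 2 / E ^ 2 - 1) := by
      rw [sqrt_div_sq_sub_one_of_sq_eq hE hsq, div_div_eq_mul_div, mul_comm, div_mul_eq_mul_div]
    refine Set.Subset.antisymm (fun l hl => ?_) (Set.singleton_subset_iff.2 ?_)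
    · obtain ⟨z, -, hsq, rfl⟩ := (mem_LsetId_iff hA).1 hl
      exact hlength z hsq
    · obtain ⟨z, hneg, hsq⟩ := exists_mul_add_neg_of_lt_abs hE hB
      exact (mem_LsetId_iff hA).2 ⟨z, hneg, hsq, (hlength z hsq).symm⟩
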